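/- (Theorem 1) Let N ≥ 1, let λ₁, …, λ_N ∈ ℝ² be unit vectors with cumulative bearing matrix P = Σ_{i=1}^N (2I₂ − 2λᵢλᵢᵀ) positive definite, and let G ∈ ℝ^{N×2N} be the block-diagonal matrix whose i-th diagonal block is λ̄ᵢᵀ. Let M ≥ 1 prediction indices be given, and for each s ∈ {1,…,M} let (k_{ij}^{(s)}) for i,j ∈ {1,…,N,*} be a symmetric positive semidefinite (N+1)×(N+1) matrix with k_{ii}^{(s)} > 0 for all i and k_{**}^{(s)} > 0; define K^{(s)}, K*^{(s)} as the corresponding block matrices with 2×2 blocks k_{ij}^{(s)}I₂ and k_{i*}^{(s)}I₂, let σ > 0, and let Σ_s = k_{**}^{(s)}I₂ − (K*^{(s)})ᵀGᵀ(G(K^{(s)} + σ²I_{2N})Gᵀ)⁻¹GK*^{(s)}. Let X₁, …, X_M be ℝ²-valued random vectors on a common probability space such that each X_s has multivariate Gaussian distribution N(μ_s, Σ_s) for some μ_s ∈ ℝ². Then for every δ ∈ (0,1], P(‖X_s − μ_s‖ ≤ β(δ)·σ̄_s for all s = 1,…,M) ≥ 1 − δ, where β(δ) = √(2 ln(M/δ)),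 σ̄_s = √(2k_{**}^{(s)}σ²/(N·k̄_s) + ξ_s/k̄_s), k̄_s = max_{1≤i≤N} k_{ii}^{(s)}, and ξ_s = k_{**}^{(s)}·k̄_s − (min_{1≤i≤N} (k_{i*}^{(s)})²)/cond(P) with cond(P) = λ_max(P)/λ_min(P). -/

import Mathlib

open Matrix MeasureTheory

/-- The rotation-and-scaling matrix `R` with first row `(0, √2)` and second row `(−√2, 0)`. -/
noncomputable def Rmat : Matrix (Fin 2) (Fin 2) ℝ :=
  !![0, Real.sqrt 2; -Real.sqrt 2, 0]

/-- `λ̄ = R λ`. -/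
noncomputable def bearingBar (l : Fin 2 → ℝ) : Fin 2 → ℝ := Rmat.mulVec l

/-- The block-diagonal bearing data matrix `G ∈ ℝ^{N×2N}` whose `i`-th diagonal block is the
row vector `λ̄ᵢᵀ`.  Columns are indexed by `Fin N × Fin 2`. -/
noncomputable def Gmat {N : ℕ} (lam : Fin N → Fin 2 → ℝ) :
    Matrix (Fin N) (Fin N × Fin 2) ℝ :=
  fun i jl => if i = jl.1 then bearingBar (lam jl.1) jl.2 else 0

/-- The cumulative bearing matrix `P = Σᵢ (2I₂ − 2λᵢλᵢᵀ)`. -/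
def cumBearing {N : ℕ} (lam : Fin N → Fin 2 → ℝ) : Matrix (Fin 2) (Fin 2) ℝ :=
  ∑ i : Fin N, ((2 : ℝ) • (1 : Matrix (Fin 2) (Fin 2) ℝ)
    - (2 : ℝ) • vecMulVec (lam i) (lam i))

/-- The `2N × 2N` kernel Gram matrix whose `(i,j)` block is `k_{ij} I₂`. -/
def Kmat {N : ℕ} (k : Matrix (Option (Fin N)) (Option (Fin N)) ℝ) :
    Matrix (Fin N × Fin 2) (Fin N × Fin 2) ℝ :=
  fun il jm => k (some il.1) (some jm.1) * (1 : Matrix (Fin 2) (Fin 2) ℝ) il.2 jm.2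

/-- The `2N × 2` kernel matrix `K*` whose `i`-th block is `k_{i*} I₂`. -/
def KstarMat {N : ℕ} (k : Matrix (Option (Fin N)) (Option (Fin N)) ℝ) :
    Matrix (Fin N × Fin 2) (Fin 2) ℝ :=
  fun il m => k (some il.1) none * (1 : Matrix (Fin 2) (Fin 2) ℝ) il.2 m

/-- The condition number `λ_max / λ_min` of a Hermitian (real symmetric) matrix. -/
noncomputable def condNum {n : Type*} [Fintype n] [DecidableEq n] [Nonempty n]
    {A : Matrix n n ℝ} (hA : A.IsHermitian) : ℝ :=
  (⨆ i, hA.eigenvalues i) / (⨅ i, hA.eigenvalues i)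

/-- Euclidean norm on ℝ². -/
noncomputable def enorm2 (v : Fin 2 → ℝ) : ℝ := Real.sqrt (v 0 ^ 2 + v 1 ^ 2)

/-- The multivariate Gaussian measure `N(μ, Σ)` on `ℝ²`, defined through its density
`(2π)⁻¹ (det Σ)^{-1/2} exp(−½ (x−μ)ᵀ Σ⁻¹ (x−μ))` with respect to Lebesgue measure. -/
noncomputable def gaussian2 (μ : Fin 2 → ℝ) (S : Matrix (Fin 2) (Fin 2) ℝ) :
    Measure (Fin 2 → ℝ) :=
  volume.withDensity fun x =>
    ENNReal.ofReal ((2 * Real.pi)⁻¹ * (Real.sqrt S.det)⁻¹ *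
      Real.exp (-(1 / 2 : ℝ) * ((x - μ) ⬝ᵥ S⁻¹ *ᵥ (x - μ))))

/-!
Write `C` for the matrix with rows `λ̄ᵢᵀ`. Then `P = CᵀC`, and the observation covariance is the
Hadamard product of the kernel matrix with `CCᵀ`, plus `2σ²I`. By the Schur product theorem it is at
most `(k̄ λ_max(P) + 2σ²) I` in the Loewner order. Inversion reverses this order, so with
`m = minᵢ kᵢ*²` the posterior covariance satisfies
`Σ ≤ (k** - m λ_min(P) / (k̄ λ_max(P) + 2σ²)) I`, and `N ≤ λ_max(P)`, which follows from
`tr P = 2N`, bounds the right-hand side by `σ̄² I`.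

If `0 < Σ ≤ v I` then `‖x‖² ≤ v · xᵀΣ⁻¹x`. In the plane the squared Mahalanobis norm of a Gaussian
vector exceeds `t` with probability exactly `exp (-t / 2)`, which is `δ / M` for `t = β(δ)²`, and a
union bound over the `M` predictions concludes.
-/

section LoewnerOrder

open scoped MatrixOrder ComplexOrder

variable {𝕜 m n : Type*} [RCLike 𝕜]

theorem posDef_of_le {A B : Matrix n n 𝕜} (hA : A.PosDef) (hAB : A ≤ B) : B.PosDef := by
  simpa using hA.add_posSemidef (le_iff.mp hAB)

theorem conjTranspose_mul_mul_mono [Fintype m] [Finite n] {A B : Matrix m m 𝕜}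
    (hAB : A ≤ B) (C : Matrix m n 𝕜) : Cᴴ * A * C ≤ Cᴴ * B * C := by
  simpa [le_iff, Matrix.mul_sub, Matrix.sub_mul] using
    (le_iff.mp hAB).conjTranspose_mul_mul_same C

theorem pos_of_smul_one_posDef [DecidableEq n] [Nonempty n] {a : ℝ}
    (ha : (a • (1 : Matrix n n 𝕜)).PosDef) : 0 < a := by
  simpa [RCLike.real_smul_eq_coe_mul] using ha.diag_pos (i := Classical.arbitrary n)

theorem smul_one_posDef [DecidableEq n] {a : ℝ} (ha : 0 < a) : (a • (1 : Matrix n n 𝕜)).PosDef :=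
  PosDef.one.smul ha

theorem inv_smul_one [Fintype n] [DecidableEq n] {a : ℝ} (ha : a ≠ 0) :
    (a • (1 : Matrix n n 𝕜))⁻¹ = a⁻¹ • 1 :=
  inv_eq_right_inv (by simp [smul_smul, ha])

/- `B - A` and `A⁻¹ - B⁻¹` are the two Schur complements of the block matrix `[B, 1; 1, A⁻¹]`. -/
theorem posDef_inv_antitone [Fintype n] [DecidableEq n] {A B : Matrix n n 𝕜} (hA : A.PosDef)
    (hAB : A ≤ B) : B⁻¹ ≤ A⁻¹ := by
  have hB := posDef_of_le hA hAB
  have := hA.isUnit.invertible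
  have := hA.inv.isUnit.invertible
  have := hB.isUnit.invertible
  have hblock : (fromBlocks B 1 1ᴴ A⁻¹).PosSemidef := by
    rw [PosDef.fromBlocks₂₂ B 1 hA.inv]
    simpa using le_iff.mp hAB
  rw [PosDef.fromBlocks₁₁ 1 A⁻¹ hB] at hblock
  simpa [le_iff] using hblock

theorem inv_smul_one_le_inv [Fintype n] [DecidableEq n] {A : Matrix n n 𝕜} (hA : A.PosDef) {a : ℝ}
    (ha : a ≠ 0) (hAa : A ≤ a • 1) : a⁻¹ • 1 ≤ A⁻¹ := by
  simpa [inv_smul_one ha] using posDef_inv_antitone hA hAa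

/- Both sides say that the block matrix `[a • 1, C; Cᴴ, 1]` is positive semidefinite. -/
theorem self_mul_conjTranspose_le_smul_one [Fintype m] [Fintype n] [DecidableEq m] [DecidableEq n]
    {C : Matrix m n 𝕜} {a : ℝ} (ha : 0 < a) (hC : Cᴴ * C ≤ a • 1) : C * Cᴴ ≤ a • 1 := by
  have := (smul_one_posDef (𝕜 := 𝕜) (n := m) ha).isUnit.invertible
  have : Invertible (1 : Matrix n n 𝕜) := invertibleOne
  have hblock : (fromBlocks (a • 1) C Cᴴ 1).PosSemidef := by
    rw [PosDef.fromBlocks₁₁ C 1 (smul_one_posDef ha), inv_smul_one ha.ne']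
    simpa [smul_sub, smul_smul, ha.ne'] using (le_iff.mp hC).smul (inv_nonneg.mpr ha.le)
  simpa [le_iff] using (PosDef.fromBlocks₂₂ (a • 1) C PosDef.one).mp hblock

theorem hadamard_le_smul_one [DecidableEq n] {A B : Matrix n n 𝕜} (hA : A.PosSemidef) {a b : ℝ}
    (hAa : ∀ i, A i i ≤ a) (hb : 0 ≤ b) (hBb : B ≤ b • 1) : A ⊙ B ≤ (a * b) • 1 := by
  have hschur : (A ⊙ (b • 1 - B)).PosSemidef := hA.hadamard (le_iff.mp hBb)
  have hdiag : (diagonal fun i => (a - A i i) * (b : 𝕜)).PosSemidef :=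
    .diagonal fun i => mul_nonneg (sub_nonneg.mpr (hAa i)) (RCLike.ofReal_nonneg.mpr hb)
  rw [le_iff]
  convert! hschur.add hdiag using 1
  ext i j
  rcases eq_or_ne i j with rfl | hij
  · simp [RCLike.real_smul_eq_coe_mul]
    ring
  · simp [hij]

/- The determinant of the block matrix `[A + E, Y; Yᴴ, D]` factors through either of its two Schur
complements, and the one in the upper left corner is positive definite. -/
theorem posDef_schur_complement_add [Fintype m] [Finite n] [DecidableEq m]
    {A E : Matrix m m 𝕜} {Y : Matrix m n 𝕜} {D : Matrix n n 𝕜}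
    (hblock : (fromBlocks A Y Yᴴ D).PosSemidef) (hE : E.PosDef) (hD : D.PosDef) :
    (D - Yᴴ * (A + E)⁻¹ * Y).PosDef := by
  classical
  have := Fintype.ofFinite n
  have := hD.isUnit.invertible
  have hcompl : (A + E - Y * D⁻¹ * Yᴴ).PosDef := by
    simpa only [sub_add_eq_add_sub] using
      PosDef.posSemidef_add ((PosDef.fromBlocks₂₂ A Y hD).mp hblock) hE
  have hAE : (A + E).PosDef := by
    simpa using hcompl.add_posSemidef (hD.inv.posSemidef.mul_mul_conjTranspose_same Y)
  have := hAE.isUnit.invertible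
  have hsemi : (D - Yᴴ * (A + E)⁻¹ * Y).PosSemidef := by
    rw [← PosDef.fromBlocks₁₁ Y D hAE, PosDef.fromBlocks₂₂ _ Y hD]
    exact hcompl.posSemidef
  have hdet : (A + E).det * (D - Yᴴ * (A + E)⁻¹ * Y).det =
      D.det * (A + E - Y * D⁻¹ * Yᴴ).det := by
    rw [← invOf_eq_nonsing_inv, ← invOf_eq_nonsing_inv, ← det_fromBlocks₁₁, ← det_fromBlocks₂₂]
  exact hsemi.posDef_iff_det_ne_zero.mpr
    (right_ne_zero_of_mul (hdet ▸ (mul_pos hD.det_pos hcompl.det_pos).ne'))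

theorem dotProduct_self_le_mul_dotProduct_inv_mulVec [Fintype n] [DecidableEq n]
    {S : Matrix n n ℝ} (hS : S.PosDef) {v : ℝ} (hv : 0 < v) (hSv : S ≤ v • 1) (x : n → ℝ) :
    x ⬝ᵥ x ≤ v * (x ⬝ᵥ S⁻¹ *ᵥ x) := by
  have := (le_iff.mp (inv_smul_one_le_inv hS hv.ne' hSv)).dotProduct_mulVec_nonneg x
  rw [sub_mulVec, dotProduct_sub, sub_nonneg, smul_mulVec, one_mulVec, dotProduct_smul,
    smul_eq_mul, inv_mul_le_iff₀ hv] at this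
  simpa using this

variable [Fintype n] [DecidableEq n] {A : Matrix n n 𝕜}

theorem le_iSup_eigenvalues_smul_one (hA : A.IsHermitian) : A ≤ (⨆ i, hA.eigenvalues i) • 1 := by
  rw [← Algebra.algebraMap_eq_smul_one]
  refine le_algebraMap_of_spectrum_le (fun x hx => ?_) hA
  obtain ⟨i, rfl⟩ := hA.spectrum_real_eq_range_eigenvalues ▸ hx
  exact le_ciSup (Set.finite_range _).bddAbove i

theorem iInf_eigenvalues_smul_one_le (hA : A.IsHermitian) : (⨅ i, hA.eigenvalues i) • 1 ≤ A := by
  rw [← Algebra.algebraMap_eq_smul_one]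
  refine algebraMap_le_of_le_spectrum (fun x hx => ?_) hA
  obtain ⟨i, rfl⟩ := hA.spectrum_real_eq_range_eigenvalues ▸ hx
  exact ciInf_le (Set.finite_range _).bddBelow i

end LoewnerOrder

section GaussianProcessRegression

open scoped MatrixOrder

variable {ι d : Type*} [DecidableEq ι] {k : Matrix (Option ι) (Option ι) ℝ} {C : Matrix ι d ℝ}

variable (k C) in
/-- Covariance matrix of the noisy scalar observations `yᵢ = Cᵢ · f(tᵢ) + εᵢ`, where the coordinates
of `f` are independent Gaussian processes with kernel matrix `k` and the `εᵢ` are independent of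
variance `c`. -/
def obsCov [Fintype d] (c : ℝ) : Matrix ι ι ℝ := k.submatrix some some ⊙ (C * Cᵀ) + c • 1

theorem obsCov_posDef [Finite ι] [Fintype d] (hk : k.PosSemidef) {c : ℝ} (hc : 0 < c) :
    (obsCov k C c).PosDef :=
  PosDef.posSemidef_add
    ((hk.submatrix some).hadamard (by simpa using posSemidef_self_mul_conjTranspose C))
    (smul_one_posDef hc)

variable [Fintype ι]

variable (k C) in
/-- Covariance matrix between the observations of `obsCov` and the value of `f` at the prediction
time, the index `none` of `k`. -/
def crossCov : Matrix ι d ℝ := diagonal (fun i => k (some i) none) * C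

theorem smul_le_crossCov_transpose_mul_self [Finite d] {q : ℝ}
    (hq : ∀ i, q ≤ k (some i) none ^ 2) :
    q • (Cᵀ * C) ≤ (crossCov k C)ᵀ * crossCov k C := by
  have hdiag : q • 1 ≤ (diagonal fun i => k (some i) none ^ 2) := by
    rw [smul_one_eq_diagonal, le_iff, diagonal_sub]
    exact .diagonal fun i => sub_nonneg.mpr (hq i)
  calc q • (Cᵀ * C) = Cᵀ * (q • (1 : Matrix ι ι ℝ)) * C := by simp
    _ ≤ Cᵀ * (diagonal fun i => k (some i) none ^ 2) * C := by
      simpa only [conjTranspose_eq_transpose_of_trivial] using conjTranspose_mul_mul_mono hdiag C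
    _ = (crossCov k C)ᵀ * crossCov k C := by
      simp only [crossCov, transpose_mul, diagonal_transpose, sq, ← diagonal_mul_diagonal,
        Matrix.mul_assoc]

variable [Fintype d] [DecidableEq d]

variable (k C) in
/-- Posterior covariance matrix of `f` at the prediction time given the observations of `obsCov`. -/
noncomputable def posteriorCov (c : ℝ) : Matrix d d ℝ :=
  k none none • 1 - (crossCov k C)ᵀ * (obsCov k C c)⁻¹ * crossCov k C

theorem obsCov_le_smul_one (hk : k.PosSemidef) {b L c : ℝ}
    (hkb : ∀ i, k (some i) (some i) ≤ b) (hL : 0 < L) (hCL : Cᵀ * C ≤ L • 1) :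
    obsCov k C c ≤ (b * L + c) • 1 := by
  have hgram : C * Cᵀ ≤ L • 1 := self_mul_conjTranspose_le_smul_one hL hCL
  have hsignal : k.submatrix some some ⊙ (C * Cᵀ) ≤ (b * L) • 1 :=
    hadamard_le_smul_one (hk.submatrix some) hkb hL.le hgram
  rw [obsCov, add_smul]
  gcongr

/- The joint covariance is the Hadamard product of a kernel matrix with the Gram matrix of the rows
of `C` and of the identity. -/
theorem jointCov_posSemidef (hk : k.PosSemidef) :
    (fromBlocks (k.submatrix some some ⊙ (C * Cᵀ)) (crossCov k C) (crossCov k C)ᵀ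
      (k none none • (1 : Matrix d d ℝ))).PosSemidef := by
  let e : ι ⊕ d → Option ι := Sum.elim some fun _ => none
  have hgram : (fromRows C (1 : Matrix d d ℝ) * (fromRows C 1)ᵀ).PosSemidef := by
    simpa using posSemidef_self_mul_conjTranspose (fromRows C (1 : Matrix d d ℝ))
  convert! (hk.submatrix e).hadamard hgram using 1
  have hsymm : ∀ i, k none (some i) = k (some i) none := fun i => by simpa using hk.1.apply _ _
  rw [transpose_fromRows, fromRows_mul_fromCols]
  ext (i | i) (j | j) <;> simp [crossCov, e, hsymm, mul_comm (k _ _)]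

theorem posteriorCov_posDef (hk : k.PosSemidef) (hk0 : 0 < k none none) {c : ℝ}
    (hc : 0 < c) : (posteriorCov k C c).PosDef :=
  posDef_schur_complement_add (jointCov_posSemidef hk) (smul_one_posDef hc) (smul_one_posDef hk0)

theorem posteriorCov_le_smul_one (hk : k.PosSemidef) {b ℓ L q c : ℝ}
    (hkb : ∀ i, k (some i) (some i) ≤ b) (hq0 : 0 ≤ q) (hq : ∀ i, q ≤ k (some i) none ^ 2)
    (hb : 0 ≤ b) (hL : 0 < L) (hCL : Cᵀ * C ≤ L • 1) (hCℓ : ℓ • 1 ≤ Cᵀ * C) (hc : 0 < c) :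
    posteriorCov k C c ≤ (k none none - q * ℓ / (b * L + c)) • 1 := by
  have hκ : 0 < b * L + c := by positivity
  have hinv : (b * L + c)⁻¹ • 1 ≤ (obsCov k C c)⁻¹ :=
    inv_smul_one_le_inv (obsCov_posDef hk hc) hκ.ne' (obsCov_le_smul_one hk hkb hL hCL)
  have hgain : (q * ℓ / (b * L + c)) • 1 ≤
      (crossCov k C)ᵀ * (obsCov k C c)⁻¹ * crossCov k C := by
    calc (q * ℓ / (b * L + c)) • (1 : Matrix d d ℝ)
        = (b * L + c)⁻¹ • q • ℓ • (1 : Matrix d d ℝ) := by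
          simp only [smul_smul]
          congr 1
          ring
      _ ≤ (b * L + c)⁻¹ • q • (Cᵀ * C) := by gcongr
      _ ≤ (b * L + c)⁻¹ • ((crossCov k C)ᵀ * crossCov k C) := by
          gcongr
          exact smul_le_crossCov_transpose_mul_self hq
      _ = (crossCov k C)ᵀ * ((b * L + c)⁻¹ • (1 : Matrix ι ι ℝ)) * crossCov k C := by simp
      _ ≤ (crossCov k C)ᵀ * (obsCov k C c)⁻¹ * crossCov k C := by
          simpa only [conjTranspose_eq_transpose_of_trivial] using
            conjTranspose_mul_mul_mono hinv (crossCov k C)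
  rw [posteriorCov, sub_smul]
  gcongr

end GaussianProcessRegression

section Bearing

open scoped MatrixOrder

variable {N : ℕ}

/-- The matrix whose `i`-th row is `λ̄ᵢᵀ`, that is `Gmat` without its zero blocks. -/
noncomputable def bearingRows (lam : Fin N → Fin 2 → ℝ) : Matrix (Fin N) (Fin 2) ℝ :=
  of fun i => bearingBar (lam i)

theorem bearingBar_apply_zero (l : Fin 2 → ℝ) : bearingBar l 0 = √2 * l 1 := by
  simp [bearingBar, Rmat, mulVec, dotProduct]

theorem bearingBar_apply_one (l : Fin 2 → ℝ) : bearingBar l 1 = -(√2 * l 0) := by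
  simp [bearingBar, Rmat, mulVec, dotProduct]

theorem bearingBar_dotProduct_self (l : Fin 2 → ℝ) :
    bearingBar l ⬝ᵥ bearingBar l = 2 * (l 0 ^ 2 + l 1 ^ 2) := by
  rw [dotProduct, Fin.sum_univ_two, bearingBar_apply_zero, bearingBar_apply_one]
  linear_combination (l 0 ^ 2 + l 1 ^ 2) * Real.sq_sqrt (zero_le_two (α := ℝ))

/- `λ` and `λ̄ / √2` form an orthonormal basis of the plane. -/
theorem vecMulVec_bearingBar {l : Fin 2 → ℝ} (hl : l 0 ^ 2 + l 1 ^ 2 = 1) :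
    vecMulVec (bearingBar l) (bearingBar l) = (2 : ℝ) • 1 - (2 : ℝ) • vecMulVec l l := by
  have h2 : √2 ^ 2 = (2 : ℝ) := Real.sq_sqrt zero_le_two
  ext i j
  fin_cases i <;> fin_cases j <;>
    simp [vecMulVec_apply, bearingBar_apply_zero, bearingBar_apply_one] <;> grind

variable {lam : Fin N → Fin 2 → ℝ}

theorem cumBearing_eq_transpose_mul_self (hlam : ∀ i, lam i 0 ^ 2 + lam i 1 ^ 2 = 1) :
    cumBearing lam = (bearingRows lam)ᵀ * bearingRows lam := by
  simp only [cumBearing, ← vecMulVec_bearingBar (hlam _)]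
  ext a b
  simp [Matrix.sum_apply, vecMulVec_apply, Matrix.mul_apply, bearingRows]

theorem trace_cumBearing (hlam : ∀ i, lam i 0 ^ 2 + lam i 1 ^ 2 = 1) :
    (cumBearing lam).trace = 2 * N := by
  simp only [cumBearing, ← vecMulVec_bearingBar (hlam _), trace_sum, trace_vecMulVec,
    bearingBar_dotProduct_self, hlam]
  simp [mul_comm]

theorem le_iSup_eigenvalues_cumBearing (hlam : ∀ i, lam i 0 ^ 2 + lam i 1 ^ 2 = 1)
    (hP : (cumBearing lam).IsHermitian) : (N : ℝ) ≤ ⨆ i, hP.eigenvalues i := by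
  have htrace := (le_iff.mp (le_iSup_eigenvalues_smul_one hP)).trace_nonneg
  rw [trace_sub, trace_cumBearing hlam, trace_smul, trace_one] at htrace
  norm_num at htrace
  linarith

theorem Gmat_mul_transpose_self (hlam : ∀ i, lam i 0 ^ 2 + lam i 1 ^ 2 = 1) :
    Gmat lam * (Gmat lam)ᵀ = (2 : ℝ) • 1 := by
  ext i j
  have hnorm := bearingBar_dotProduct_self (lam i)
  rw [hlam i, dotProduct, mul_one] at hnorm
  rcases eq_or_ne i j with rfl | hij <;>
    simp_all [Matrix.mul_apply, Gmat, Fintype.sum_prod_type]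

theorem Gmat_mul_Kmat_mul_transpose (k : Matrix (Option (Fin N)) (Option (Fin N)) ℝ) :
    Gmat lam * Kmat k * (Gmat lam)ᵀ =
      k.submatrix some some ⊙ (bearingRows lam * (bearingRows lam)ᵀ) := by
  ext i j
  simp [Matrix.mul_apply, Gmat, Kmat, bearingRows, Fintype.sum_prod_type, Matrix.one_apply]
  ring

theorem Gmat_mul_KstarMat (k : Matrix (Option (Fin N)) (Option (Fin N)) ℝ) :
    Gmat lam * KstarMat k = crossCov k (bearingRows lam) := by
  ext i l
  rw [crossCov, diagonal_mul]
  simp [Matrix.mul_apply, Gmat, KstarMat, bearingRows, Fintype.sum_prod_type, Matrix.one_apply,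
    mul_comm]

theorem posteriorCov_bearingRows (hlam : ∀ i, lam i 0 ^ 2 + lam i 1 ^ 2 = 1)
    (k : Matrix (Option (Fin N)) (Option (Fin N)) ℝ) (c : ℝ) :
    k none none • (1 : Matrix (Fin 2) (Fin 2) ℝ) - (KstarMat k)ᵀ * (Gmat lam)ᵀ *
        (Gmat lam * (Kmat k + c • (1 : Matrix (Fin N × Fin 2) (Fin N × Fin 2) ℝ)) *
          (Gmat lam)ᵀ)⁻¹ * Gmat lam * KstarMat k =
      posteriorCov k (bearingRows lam) (2 * c) := by
  have hobs : Gmat lam * (Kmat k + c • (1 : Matrix (Fin N × Fin 2) (Fin N × Fin 2) ℝ)) *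
      (Gmat lam)ᵀ = obsCov k (bearingRows lam) (2 * c) := by
    simp [Matrix.mul_add, Matrix.add_mul, Gmat_mul_Kmat_mul_transpose,
      Gmat_mul_transpose_self hlam, obsCov, smul_smul, mul_comm]
  rw [hobs, ← transpose_mul, Matrix.mul_assoc _ (Gmat lam), Gmat_mul_KstarMat, posteriorCov]

theorem posteriorVar_bound_le {n k₀ b ℓ L q v : ℝ} (hn : 0 < n) (hb : 0 < b) (hnL : n ≤ L)
    (hv : 0 ≤ v) (hk₀ : 0 ≤ k₀) (hle : q * ℓ / (b * L + 2 * v) ≤ k₀) :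
    k₀ - q * ℓ / (b * L + 2 * v) ≤ 2 * k₀ * v / (n * b) + (k₀ * b - q / (L / ℓ)) / b := by
  have hL : 0 < L := hn.trans_le hnL
  have hκ : b * L + 2 * v ≠ 0 := by positivity
  set w := q * ℓ / (b * L + 2 * v) with hw
  have hexcess : (k₀ * b - q / (L / ℓ)) / b = k₀ - w - 2 * w * v / (L * b) := by
    rw [hw]
    field_simp [hκ]
    ring
  have hnoise : 2 * w * v / (L * b) ≤ 2 * k₀ * v / (n * b) := by
    gcongr
  linarith

theorem posteriorCov_bearingRows_le (hN : 0 < N) (hlam : ∀ i, lam i 0 ^ 2 + lam i 1 ^ 2 = 1)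
    (hP : (cumBearing lam).PosDef) {k : Matrix (Option (Fin N)) (Option (Fin N)) ℝ}
    (hk : k.PosSemidef) (hk0 : 0 < k none none) {b q v : ℝ} (hb : 0 < b)
    (hkb : ∀ i, k (some i) (some i) ≤ b) (hq0 : 0 ≤ q) (hq : ∀ i, q ≤ k (some i) none ^ 2)
    (hv : 0 < v) :
    posteriorCov k (bearingRows lam) (2 * v) ≤
      (2 * k none none * v / (N * b) + (k none none * b - q / condNum hP.1) / b) • 1 := by
  have hN0 : (0 : ℝ) < N := Nat.cast_pos.mpr hN
  have hNL := le_iSup_eigenvalues_cumBearing hlam hP.1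
  have hgram := cumBearing_eq_transpose_mul_self hlam
  have hspectral := posteriorCov_le_smul_one (C := bearingRows lam) hk hkb hq0 hq hb.le
    (hN0.trans_le hNL) (hgram.ge.trans (le_iSup_eigenvalues_smul_one hP.1))
    ((iInf_eigenvalues_smul_one_le hP.1).trans hgram.le) (mul_pos two_pos hv)
  have hpos := pos_of_smul_one_posDef
    (posDef_of_le (posteriorCov_posDef hk hk0 (mul_pos two_pos hv)) hspectral)
  refine hspectral.trans ?_
  gcongr
  exact posteriorVar_bound_le hN0 hb hNL hv.le hk0.le (sub_pos.mp hpos).le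

end Bearing

section PlaneGaussian

open scoped MatrixOrder ENNReal

theorem setLIntegral_Ioi_comp_sq (f : ℝ → ℝ≥0∞) :
    ∫⁻ r in Set.Ioi 0, ENNReal.ofReal r * f (r ^ 2) = 2⁻¹ * ∫⁻ s in Set.Ioi 0, f s := by
  have himage : (fun r : ℝ => r ^ 2) '' Set.Ioi 0 = Set.Ioi 0 := by
    ext s
    refine ⟨?_, fun hs => ⟨√s, Real.sqrt_pos.mpr hs, Real.sq_sqrt (le_of_lt hs)⟩⟩
    rintro ⟨r, hr, rfl⟩
    exact pow_pos (Set.mem_Ioi.mp hr) 2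
  have hsubst := lintegral_image_eq_lintegral_deriv_mul_of_monotoneOn (s := Set.Ioi (0 : ℝ))
    (f := fun r => r ^ 2) (f' := fun r => 2 * r) measurableSet_Ioi
    (fun r _ => by simpa using (hasDerivAt_pow 2 r).hasDerivWithinAt)
    (fun r hr s _ hrs => pow_le_pow_left₀ (le_of_lt hr) hrs 2) f
  rw [himage] at hsubst
  rw [hsubst, ← lintegral_const_mul' _ _ (by simp)]
  congr! 2 with r
  rw [ENNReal.ofReal_mul zero_le_two, ENNReal.ofReal_ofNat, ← mul_assoc, ← mul_assoc,
    ENNReal.inv_mul_cancel two_ne_zero ENNReal.ofNat_ne_top, one_mul]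

theorem lintegral_dotProduct_self_plane {f : ℝ → ℝ≥0∞} (hf : Measurable f) :
    ∫⁻ x : Fin 2 → ℝ, f (x ⬝ᵥ x) = ENNReal.ofReal Real.pi * ∫⁻ s in Set.Ioi 0, f s := by
  have hcircle : ENNReal.ofReal (2 * Real.pi) * 2⁻¹ = ENNReal.ofReal Real.pi := by
    rw [mul_comm 2, ENNReal.ofReal_mul Real.pi_nonneg, ENNReal.ofReal_ofNat, mul_assoc,
      ENNReal.mul_inv_cancel two_ne_zero ENNReal.ofNat_ne_top, mul_one]
  calc ∫⁻ x : Fin 2 → ℝ, f (x ⬝ᵥ x) = ∫⁻ p : ℝ × ℝ, f (p.1 ^ 2 + p.2 ^ 2) := by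
        rw [← (volume_preserving_finTwoArrow ℝ).lintegral_comp (by fun_prop)]
        simp [dotProduct, sq, MeasurableEquiv.finTwoArrow]
    _ = ∫⁻ p in Set.Ioi 0 ×ˢ Set.Ioo (-Real.pi) Real.pi, ENNReal.ofReal p.1 * f (p.1 ^ 2) := by
        rw [← lintegral_comp_polarCoord_symm, polarCoord_target]
        simp [mul_pow, ← mul_add]
    _ = ENNReal.ofReal (2 * Real.pi) * ∫⁻ r in Set.Ioi 0, ENNReal.ofReal r * f (r ^ 2) := by
        rw [Measure.volume_eq_prod, setLIntegral_prod_symm _ (by fun_prop)]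
        simp [mul_comm, ← two_mul]
    _ = ENNReal.ofReal Real.pi * ∫⁻ s in Set.Ioi 0, f s := by
        rw [setLIntegral_Ioi_comp_sq, ← mul_assoc, hcircle]

theorem lintegral_dotProduct_inv_mulVec {n : Type*} [Fintype n] [DecidableEq n]
    {S : Matrix n n ℝ} (hS : S.PosDef) {f : ℝ → ℝ≥0∞} (hf : Measurable f) :
    ∫⁻ x, f (x ⬝ᵥ S⁻¹ *ᵥ x) = ENNReal.ofReal √S.det * ∫⁻ y : n → ℝ, f (y ⬝ᵥ y) := by
  obtain ⟨B, rfl⟩ := CStarAlgebra.nonneg_iff_eq_star_mul_self.mp hS.posSemidef.nonneg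
  have hdet : (star B * B).det = B.det ^ 2 := by
    simp [star_eq_conjTranspose, conjTranspose_eq_transpose_of_trivial, sq]
  have hB : B.det ≠ 0 := by
    intro h
    simpa [hdet, h] using hS.det_pos
  have hstd : ∀ y, Bᵀ *ᵥ y ⬝ᵥ (star B * B)⁻¹ *ᵥ (Bᵀ *ᵥ y) = y ⬝ᵥ y := by
    intro y
    have hBT : IsUnit Bᵀ.det := by simpa using hB
    rw [star_eq_conjTranspose, conjTranspose_eq_transpose_of_trivial, Matrix.mul_inv_rev,
      mulVec_mulVec, nonsing_inv_mul_cancel_right _ _ hBT, mulVec_transpose, ← dotProduct_mulVec,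
      mulVec_mulVec, mul_nonsing_inv _ hB.isUnit, one_mulVec]
  have hmap := Real.map_matrix_volume_pi_eq_smul_volume_pi (det_transpose B ▸ hB)
  have hcov := lintegral_map (μ := volume) (f := fun x => f (x ⬝ᵥ (star B * B)⁻¹ *ᵥ x))
    (g := toLin' Bᵀ) (by fun_prop) (by fun_prop)
  simp only [hmap, lintegral_smul_measure, toLin'_apply, hstd] at hcov
  rw [← hcov, hdet, Real.sqrt_sq_eq_abs, det_transpose, smul_eq_mul, ← mul_assoc,
    ← ENNReal.ofReal_mul (abs_nonneg _), ← abs_mul, mul_inv_cancel₀ hB, abs_one,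
    ENNReal.ofReal_one, one_mul]

theorem lintegral_mahalanobis_gaussian2 (μ : Fin 2 → ℝ) {S : Matrix (Fin 2) (Fin 2) ℝ}
    (hS : S.PosDef) {f : ℝ → ℝ≥0∞} (hf : Measurable f) :
    ∫⁻ x, f ((x - μ) ⬝ᵥ S⁻¹ *ᵥ (x - μ)) ∂gaussian2 μ S =
      2⁻¹ * ∫⁻ s in Set.Ioi 0, ENNReal.ofReal (Real.exp (-(1 / 2) * s)) * f s := by
  set h : ℝ → ℝ≥0∞ := fun s => ENNReal.ofReal (Real.exp (-(1 / 2) * s)) * f s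
  have hh : Measurable h := by fun_prop
  have hdet : 0 < √S.det := Real.sqrt_pos.mpr hS.det_pos
  have hconst : ENNReal.ofReal ((2 * Real.pi)⁻¹ * (√S.det)⁻¹) *
      (ENNReal.ofReal √S.det * ENNReal.ofReal Real.pi) = 2⁻¹ := by
    rw [← ENNReal.ofReal_mul hdet.le, ← ENNReal.ofReal_mul (by positivity),
      ← ENNReal.ofReal_ofNat 2, ← ENNReal.ofReal_inv_of_pos two_pos]
    congr 1
    field_simp
  calc ∫⁻ x, f ((x - μ) ⬝ᵥ S⁻¹ *ᵥ (x - μ)) ∂gaussian2 μ S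
      = ENNReal.ofReal ((2 * Real.pi)⁻¹ * (√S.det)⁻¹) *
          ∫⁻ x, h ((x - μ) ⬝ᵥ S⁻¹ *ᵥ (x - μ)) := by
        rw [gaussian2, lintegral_withDensity_eq_lintegral_mul _ (by fun_prop) (by fun_prop),
          ← lintegral_const_mul' _ _ ENNReal.ofReal_ne_top]
        refine lintegral_congr fun x => ?_
        rw [Pi.mul_apply, ENNReal.ofReal_mul (by positivity), mul_assoc]
    _ = ENNReal.ofReal ((2 * Real.pi)⁻¹ * (√S.det)⁻¹) * (ENNReal.ofReal √S.det *
          (ENNReal.ofReal Real.pi * ∫⁻ s in Set.Ioi 0, h s)) := by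
        rw [lintegral_sub_right_eq_self (fun x => h (x ⬝ᵥ S⁻¹ *ᵥ x)),
          lintegral_dotProduct_inv_mulVec hS hh, lintegral_dotProduct_self_plane hh]
    _ = 2⁻¹ * ∫⁻ s in Set.Ioi 0, h s := by rw [← hconst, mul_assoc, mul_assoc]

theorem setLIntegral_Ioi_exp_neg_half (t : ℝ) :
    ∫⁻ s in Set.Ioi t, ENNReal.ofReal (Real.exp (-(1 / 2) * s)) =
      2 * ENNReal.ofReal (Real.exp (-(1 / 2) * t)) := by
  rw [← ofReal_integral_eq_lintegral_ofReal (integrableOn_exp_mul_Ioi (by norm_num) t)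
    (.of_forall fun _ => (Real.exp_pos _).le), integral_exp_mul_Ioi (by norm_num),
    ← ENNReal.ofReal_ofNat 2, ← ENNReal.ofReal_mul zero_le_two]
  congr 1
  ring

theorem gaussian2_lt_mahalanobis (μ : Fin 2 → ℝ) {S : Matrix (Fin 2) (Fin 2) ℝ} (hS : S.PosDef)
    {t : ℝ} (ht : 0 ≤ t) :
    gaussian2 μ S {x | t < (x - μ) ⬝ᵥ S⁻¹ *ᵥ (x - μ)} =
      ENNReal.ofReal (Real.exp (-(1 / 2) * t)) := by
  have hE : MeasurableSet {x | t < (x - μ) ⬝ᵥ S⁻¹ *ᵥ (x - μ)} :=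
    measurableSet_lt measurable_const (by fun_prop)
  have htail : ∫⁻ s in Set.Ioi 0,
      ENNReal.ofReal (Real.exp (-(1 / 2) * s)) * (Set.Ioi t).indicator 1 s =
        2 * ENNReal.ofReal (Real.exp (-(1 / 2) * t)) := by
    have hcut : ∀ s, ENNReal.ofReal (Real.exp (-(1 / 2) * s)) * (Set.Ioi t).indicator 1 s =
        (Set.Ioi t).indicator (fun s => ENNReal.ofReal (Real.exp (-(1 / 2) * s))) s := by
      simp [Set.indicator_apply]
    simp only [hcut]
    rw [setLIntegral_indicator measurableSet_Ioi, Set.inter_eq_left.mpr (Set.Ioi_subset_Ioi ht),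
      setLIntegral_Ioi_exp_neg_half]
  rw [← lintegral_indicator_one hE]
  refine (lintegral_mahalanobis_gaussian2 μ hS
    (measurable_one.indicator measurableSet_Ioi)).trans ?_
  rw [htail, ← mul_assoc, ENNReal.inv_mul_cancel two_ne_zero ENNReal.ofNat_ne_top, one_mul]

theorem gaussian2_lt_enorm2_le (μ : Fin 2 → ℝ) {S : Matrix (Fin 2) (Fin 2) ℝ} (hS : S.PosDef)
    {v : ℝ} (hSv : S ≤ v • 1) {t : ℝ} (ht : 0 ≤ t) :
    gaussian2 μ S {x | √t * √v < enorm2 (x - μ)} ≤ ENNReal.ofReal (Real.exp (-(1 / 2) * t)) := by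
  have hv : 0 < v := pos_of_smul_one_posDef (posDef_of_le hS hSv)
  rw [← gaussian2_lt_mahalanobis μ hS ht]
  refine measure_mono fun x hx => ?_
  have hquad := dotProduct_self_le_mul_dotProduct_inv_mulVec hS hv hSv (x - μ)
  have hsq : t * v < (x - μ) ⬝ᵥ (x - μ) := by
    rw [Set.mem_ofPred_eq, enorm2, ← Real.sqrt_mul ht, Real.sqrt_lt_sqrt_iff (by positivity)] at hx
    simpa [dotProduct, sq] using hx
  rw [Set.mem_ofPred_eq]
  exact lt_of_mul_lt_mul_left (by linarith) hv.le

theorem measure_lt_enorm2_sub_le {Ω : Type*} [MeasurableSpace Ω] {P : Measure Ω} {X : Ω → Fin 2 → ℝ}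
    (hX : AEMeasurable X P) {μ : Fin 2 → ℝ} {S : Matrix (Fin 2) (Fin 2) ℝ}
    (hdist : P.map X = gaussian2 μ S) (hS : S.PosDef) {v : ℝ} (hSv : S ≤ v • 1) {t : ℝ}
    (ht : 0 ≤ t) :
    P {ω | √t * √v < enorm2 (X ω - μ)} ≤ ENNReal.ofReal (Real.exp (-(1 / 2) * t)) :=
  (Measure.le_map_apply hX {x | √t * √v < enorm2 (x - μ)}).trans
    (hdist ▸ gaussian2_lt_enorm2_le μ hS hSv ht)

theorem one_sub_sum_le_measure_forall {Ω ι : Type*} [MeasurableSpace Ω] (P : Measure Ω)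
    [IsProbabilityMeasure P] [Fintype ι] (p : ι → Ω → Prop) :
    1 - ∑ i, P {ω | ¬ p i ω} ≤ P {ω | ∀ i, p i ω} := by
  have hcompl : {ω | ∀ i, p i ω}ᶜ = ⋃ i, {ω | ¬ p i ω} := by
    ext ω
    simp
  have hcover := measure_univ_le_add_compl (μ := P) {ω | ∀ i, p i ω}
  rw [measure_univ, hcompl] at hcover
  refine tsub_le_iff_right.mpr (hcover.trans ?_)
  gcongr
  exact measure_iUnion_fintype_le P _

theorem one_sub_le_measure_forall_enorm2_le {Ω ι : Type*} [MeasurableSpace Ω] {P : Measure Ω}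
    [IsProbabilityMeasure P] [Fintype ι] {X : ι → Ω → Fin 2 → ℝ} (hX : ∀ i, AEMeasurable (X i) P)
    {μ : ι → Fin 2 → ℝ} {S : ι → Matrix (Fin 2) (Fin 2) ℝ}
    (hdist : ∀ i, P.map (X i) = gaussian2 (μ i) (S i)) (hS : ∀ i, (S i).PosDef) {v : ι → ℝ}
    (hSv : ∀ i, S i ≤ v i • 1) {δ : ℝ} (hδ : 0 < δ) (hδι : δ ≤ Fintype.card ι) :
    1 - ENNReal.ofReal δ ≤
      P {ω | ∀ i, enorm2 (X i ω - μ i) ≤ √(2 * Real.log (Fintype.card ι / δ)) * √(v i)} := by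
  set t := 2 * Real.log (Fintype.card ι / δ) with ht_def
  have hcard : 0 < (Fintype.card ι : ℝ) := hδ.trans_le hδι
  have ht : 0 ≤ t := mul_nonneg zero_le_two (Real.log_nonneg ((one_le_div hδ).mpr hδι))
  have hexp : Real.exp (-(1 / 2) * t) = δ / Fintype.card ι := by
    rw [ht_def, ← mul_assoc, neg_mul, one_div_mul_cancel two_ne_zero, neg_one_mul, Real.exp_neg,
      Real.exp_log (by positivity), inv_div]
  have hsum : ∑ i, P {ω | ¬ enorm2 (X i ω - μ i) ≤ √t * √(v i)} ≤ ENNReal.ofReal δ := by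
    calc ∑ i, P {ω | ¬ enorm2 (X i ω - μ i) ≤ √t * √(v i)}
        ≤ ∑ _i : ι, ENNReal.ofReal (δ / Fintype.card ι) := by
          gcongr with i
          simpa only [not_le, hexp] using
            measure_lt_enorm2_sub_le (hX i) (hdist i) (hS i) (hSv i) ht
      _ = ENNReal.ofReal δ := by
          rw [Finset.sum_const, Finset.card_univ, ← ENNReal.ofReal_nsmul, nsmul_eq_mul,
            mul_div_cancel₀ _ hcard.ne']
  exact (tsub_le_tsub_left hsum 1).trans (one_sub_sum_le_measure_forall P _)

end PlaneGaussian

/-- **Theorem 1**: probabilistic bearing-data-dependent tracking error bound. -/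
theorem probabilistic_tracking_error_bound {N M : ℕ} (hN : 1 ≤ N) (hM : 1 ≤ M)
    (lam : Fin N → Fin 2 → ℝ) (hlam : ∀ i, lam i 0 ^ 2 + lam i 1 ^ 2 = 1)
    (hPd : (cumBearing lam).PosDef)
    (k : Fin M → Matrix (Option (Fin N)) (Option (Fin N)) ℝ)
    (hk : ∀ s, (k s).PosSemidef)
    (hkd : ∀ s, ∀ i : Fin N, 0 < k s (some i) (some i))
    (hkstar : ∀ s, 0 < k s none none)
    (σ : ℝ) (hσ : 0 < σ)
    (Sig : Fin M → Matrix (Fin 2) (Fin 2) ℝ)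
    (hSig : ∀ s, Sig s =
      k s none none • (1 : Matrix (Fin 2) (Fin 2) ℝ)
        - (KstarMat (k s))ᵀ * (Gmat lam)ᵀ
          * (Gmat lam * (Kmat (k s) + σ ^ 2 • (1 : Matrix (Fin N × Fin 2) (Fin N × Fin 2) ℝ))
              * (Gmat lam)ᵀ)⁻¹
          * Gmat lam * KstarMat (k s))
    (kbar : Fin M → ℝ)
    (hkbar : ∀ s, kbar s = Finset.univ.sup'
      (Finset.univ_nonempty_iff.mpr (Fin.pos_iff_nonempty.mp hN))
      (fun i : Fin N => k s (some i) (some i)))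
    (ξ : Fin M → ℝ)
    (hξ : ∀ s, ξ s = k s none none * kbar s
      - (Finset.univ.inf'
          (Finset.univ_nonempty_iff.mpr (Fin.pos_iff_nonempty.mp hN))
          (fun i : Fin N => k s (some i) none ^ 2)) / condNum hPd.1)
    (σbar : Fin M → ℝ)
    (hσbar : ∀ s, σbar s =
      Real.sqrt (2 * k s none none * σ ^ 2 / (N * kbar s) + ξ s / kbar s))
    {Ω : Type*} [MeasurableSpace Ω] (P : Measure Ω) [IsProbabilityMeasure P]
    (X : Fin M → Ω → Fin 2 → ℝ) (hX : ∀ s, Measurable (X s))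
    (μ : Fin M → Fin 2 → ℝ)
    (hdist : ∀ s, P.map (X s) = gaussian2 (μ s) (Sig s))
    (δ : ℝ) (hδ : 0 < δ) (hδ1 : δ ≤ 1) :
    1 - ENNReal.ofReal δ ≤
      P {ω | ∀ s, enorm2 (X s ω - μ s) ≤
        Real.sqrt (2 * Real.log (M / δ)) * σbar s} := by
  have hkb : ∀ s i, k s (some i) (some i) ≤ kbar s := fun s i =>
    hkbar s ▸ Finset.le_sup' (fun i => k s (some i) (some i)) (Finset.mem_univ i)
  have hb : ∀ s, 0 < kbar s := fun s => (hkd s ⟨0, hN⟩).trans_le (hkb s _)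
  have hpost : ∀ s, Sig s = posteriorCov (k s) (bearingRows lam) (2 * σ ^ 2) := fun s =>
    (hSig s).trans (posteriorCov_bearingRows hlam (k s) (σ ^ 2))
  have hpos : ∀ s, (Sig s).PosDef := fun s =>
    hpost s ▸ posteriorCov_posDef (hk s) (hkstar s) (by positivity)
  open scoped MatrixOrder in
  have hle : ∀ s, Sig s ≤ (2 * k s none none * σ ^ 2 / (N * kbar s) + ξ s / kbar s) • 1 := by
    intro s
    rw [hpost, hξ]
    exact posteriorCov_bearingRows_le hN hlam hPd (hk s) (hkstar s) (hb s) (hkb s)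
      (Finset.le_inf' _ _ fun i _ => sq_nonneg (k s (some i) none))
      (fun i => Finset.inf'_le _ (Finset.mem_univ i)) (pow_pos hσ 2)
  have hδM : δ ≤ Fintype.card (Fin M) := by
    rw [Fintype.card_fin]
    exact hδ1.trans (Nat.one_le_cast.mpr hM)
  simpa only [hσbar, Fintype.card_fin] using one_sub_le_measure_forall_enorm2_le
    (fun s => (hX s).aemeasurable) hdist hpos hle hδ hδM
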